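/- Let X be a real inner product space, μ, η ∈ ℝ, and (γ0, γ1, γ2) ∈ ℝ³ a solution of the system S1(μ,η). Define the symmetric matrix G ∈ ℝ^{2×2} by G₁₁ = 1 − γ0², G₁₂ = G₂₁ = −γ0γ1 + (μ − η − 1)/2, G₂₂ = 1 − γ0² − γ1² + η − ημ. Then for every sequence (yⁿ)_{n∈ℤ} in X and every n: ⟪(yⁿ − yⁿ⁻¹) + μ(yⁿ⁻¹ − yⁿ⁻²), yⁿ − η·yⁿ⁻¹⟫ = ‖(yⁿ, yⁿ⁻¹)‖²_G − ‖(yⁿ⁻¹, yⁿ⁻²)‖²_G + ‖γ0·yⁿ + γ1·yⁿ⁻¹ + γ2·yⁿ⁻²‖². -/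

import Mathlib

open scoped BigOperators RealInnerProductSpace

/-- The weighted "norm" `‖Y‖²_G = Σ_{i,j} G_{ij} ⟪y_i, y_j⟫` associated with a
matrix `G` and a tuple `Y` in a real inner product space. -/
noncomputable def gnormSq {X : Type*} [NormedAddCommGroup X] [InnerProductSpace ℝ X]
    {s : ℕ} (G : Matrix (Fin s) (Fin s) ℝ) (Y : Fin s → X) : ℝ :=
  ∑ i : Fin s, ∑ j : Fin s, G i j * ⟪Y i, Y j⟫

/-- The `k = δ = 1` reduced system `S1(μ,η)` for `(γ0, γ1, γ2)`. -/
def S1 (μ η γ0 γ1 γ2 : ℝ) : Prop :=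
  2 * γ0 * γ2 = -μ ∧
  2 * γ0 * γ1 + 2 * γ1 * γ2 = η * μ - η + μ - 1 ∧
  γ0 ^ 2 + γ1 ^ 2 + γ2 ^ 2 = 1 - η * μ + η

/-!
Both sides are quadratic forms in `(yⁿ, yⁿ⁻¹, yⁿ⁻²)`, and a quadratic form depends only on the
symmetric part of its matrix. Of the six coefficients to compare, those of `(yⁿ, yⁿ)`, `(yⁿ, yⁿ⁻¹)`
and `(yⁿ⁻¹, yⁿ⁻¹)` agree by the choice of `G`; those of `(yⁿ, yⁿ⁻²)`, `(yⁿ⁻¹, yⁿ⁻²)` and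
`(yⁿ⁻², yⁿ⁻²)` are the three equations of `S1`.
-/

section GIdentity

open Matrix

variable {X : Type*} [NormedAddCommGroup X] [InnerProductSpace ℝ X] {k : ℕ}

theorem gnormSq_add (G H : Matrix (Fin k) (Fin k) ℝ) (Y : Fin k → X) :
    gnormSq (G + H) Y = gnormSq G Y + gnormSq H Y := by
  simp only [gnormSq, Matrix.add_apply, add_mul, Finset.sum_add_distrib]

theorem gnormSq_sub (G H : Matrix (Fin k) (Fin k) ℝ) (Y : Fin k → X) :
    gnormSq (G - H) Y = gnormSq G Y - gnormSq H Y := by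
  simp only [gnormSq, Matrix.sub_apply, sub_mul, Finset.sum_sub_distrib]

theorem gnormSq_transpose (G : Matrix (Fin k) (Fin k) ℝ) (Y : Fin k → X) :
    gnormSq Gᵀ Y = gnormSq G Y := by
  unfold gnormSq
  rw [Finset.sum_comm]
  simp only [transpose_apply, real_inner_comm]

theorem gnormSq_eq_of_add_transpose_eq {G H : Matrix (Fin k) (Fin k) ℝ}
    (h : G + Gᵀ = H + Hᵀ) (Y : Fin k → X) : gnormSq G Y = gnormSq H Y := by
  have hY : gnormSq (G + Gᵀ) Y = gnormSq (H + Hᵀ) Y := by rw [h]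
  simp only [gnormSq_add, gnormSq_transpose] at hY
  linarith

theorem gnormSq_vecMulVec (p q : Fin k → ℝ) (Y : Fin k → X) :
    gnormSq (vecMulVec p q) Y = ⟪∑ i, p i • Y i, ∑ j, q j • Y j⟫ := by
  rw [sum_inner]
  simp only [gnormSq, vecMulVec_apply, inner_sum, real_inner_smul_left, real_inner_smul_right,
    mul_assoc, mul_left_comm]

theorem gnormSq_vecMulVec_self (c : Fin k → ℝ) (Y : Fin k → X) :
    gnormSq (vecMulVec c c) Y = ‖∑ i, c i • Y i‖ ^ 2 := by
  rw [gnormSq_vecMulVec, real_inner_self_eq_norm_sq]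

/-- The matrix `G` bordered by a zero last row and column. -/
def padLast {R : Type*} [Zero R] (G : Matrix (Fin k) (Fin k) R) :
    Matrix (Fin (k + 1)) (Fin (k + 1)) R :=
  of (Fin.snoc (fun i => Fin.snoc (G i) 0) 0)

/-- The matrix `G` bordered by a zero first row and column. -/
def padFirst {R : Type*} [Zero R] (G : Matrix (Fin k) (Fin k) R) :
    Matrix (Fin (k + 1)) (Fin (k + 1)) R :=
  of (Fin.cons 0 fun i => Fin.cons 0 (G i))

theorem padLast_fin_two {R : Type*} [Zero R] (a b c d : R) :
    padLast !![a, b; c, d] = !![a, b, 0; c, d, 0; 0, 0, 0] := by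
  ext i j
  fin_cases i <;> fin_cases j <;> rfl

theorem padFirst_fin_two {R : Type*} [Zero R] (a b c d : R) :
    padFirst !![a, b; c, d] = !![0, 0, 0; 0, a, b; 0, c, d] := by
  ext i j
  fin_cases i <;> fin_cases j <;> rfl

theorem gnormSq_padLast (G : Matrix (Fin k) (Fin k) ℝ) (Y : Fin (k + 1) → X) :
    gnormSq (padLast G) Y = gnormSq G (Fin.init Y) := by
  simp [gnormSq, padLast, Fin.sum_univ_castSucc, Fin.init]

theorem gnormSq_padFirst (G : Matrix (Fin k) (Fin k) ℝ) (Y : Fin (k + 1) → X) :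
    gnormSq (padFirst G) Y = gnormSq G (Fin.tail Y) := by
  simp [gnormSq, padFirst, Fin.sum_univ_succ, Fin.tail]

/-- The algebraic condition behind Dahlquist's `G`-stability, for `k`-step combinations with
coefficients `p` and `q`: up to a skew-symmetric matrix, `p qᵀ` is the one-step increment of the
form `G` plus the square of the linear form `c`. Coefficients run from the newest vector to the
oldest. -/
def IsGDecomposition (G : Matrix (Fin k) (Fin k) ℝ) (p q c : Fin (k + 1) → ℝ) : Prop :=
  vecMulVec p q + (vecMulVec p q)ᵀ =
    (padLast G - padFirst G + vecMulVec c c) + (padLast G - padFirst G + vecMulVec c c)ᵀ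

theorem IsGDecomposition.inner_sum_smul_sum_smul {G : Matrix (Fin k) (Fin k) ℝ}
    {p q c : Fin (k + 1) → ℝ} (h : IsGDecomposition G p q c) (Y : Fin (k + 1) → X) :
    ⟪∑ i, p i • Y i, ∑ i, q i • Y i⟫ =
      gnormSq G (Fin.init Y) - gnormSq G (Fin.tail Y) + ‖∑ i, c i • Y i‖ ^ 2 := by
  rw [← gnormSq_vecMulVec, gnormSq_eq_of_add_transpose_eq h, gnormSq_add, gnormSq_sub,
    gnormSq_padLast, gnormSq_padFirst, gnormSq_vecMulVec_self]

end GIdentity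

/-- The weighting matrix `G` of the decoupled BDF-1 scheme. -/
noncomputable def bdf1Weight (μ η γ0 γ1 : ℝ) : Matrix (Fin 2) (Fin 2) ℝ :=
  !![1 - γ0 ^ 2, -(γ0 * γ1) + (μ - η - 1) / 2;
     -(γ0 * γ1) + (μ - η - 1) / 2, 1 - γ0 ^ 2 - γ1 ^ 2 + η - η * μ]

theorem S1.isGDecomposition {μ η γ0 γ1 γ2 : ℝ} (h : S1 μ η γ0 γ1 γ2) :
    IsGDecomposition (bdf1Weight μ η γ0 γ1) ![1, μ - 1, -μ] ![1, -η, 0] ![γ0, γ1, γ2] := by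
  obtain ⟨hγ02, hγ12, hsq⟩ := h
  rw [IsGDecomposition, bdf1Weight, padLast_fin_two, padFirst_fin_two]
  ext i j
  fin_cases i <;> fin_cases j <;>
    simp only [Matrix.add_apply, Matrix.sub_apply, Matrix.transpose_apply, Matrix.vecMulVec_apply,
      Matrix.of_apply, Matrix.cons_val, Fin.zero_eta, Fin.mk_one, Fin.reduceFinMk] <;>
    linarith

/-- **Summation identity for the decoupled BDF-1 scheme.**
If `(γ0,γ1,γ2)` solves `S1(μ,η)` and `G` is the associated 2×2 weighting matrix, then
for every sequence in a real inner product space the BDF-1 telescoping identity holds. -/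
theorem summation_identity_bdf1
    {X : Type*} [NormedAddCommGroup X] [InnerProductSpace ℝ X]
    (μ η γ0 γ1 γ2 : ℝ) (h : S1 μ η γ0 γ1 γ2)
    (y : ℤ → X) (n : ℤ) :
    ⟪(y n - y (n - 1)) + μ • (y (n - 1) - y (n - 2)), y n - η • y (n - 1)⟫
      = gnormSq
          !![1 - γ0 ^ 2, -(γ0 * γ1) + (μ - η - 1) / 2;
             -(γ0 * γ1) + (μ - η - 1) / 2, 1 - γ0 ^ 2 - γ1 ^ 2 + η - η * μ]
          ![y n, y (n - 1)]
        - gnormSq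
            !![1 - γ0 ^ 2, -(γ0 * γ1) + (μ - η - 1) / 2;
               -(γ0 * γ1) + (μ - η - 1) / 2, 1 - γ0 ^ 2 - γ1 ^ 2 + η - η * μ]
            ![y (n - 1), y (n - 2)]
        + ‖γ0 • y n + γ1 • y (n - 1) + γ2 • y (n - 2)‖ ^ 2 := by
  have hdiff : (y n - y (n - 1)) + μ • (y (n - 1) - y (n - 2)) =
      ∑ i, ![1, μ - 1, -μ] i • ![y n, y (n - 1), y (n - 2)] i := by
    simp only [Fin.sum_univ_three, Matrix.cons_val]
    module
  have hextrap : y n - η • y (n - 1) =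
      ∑ i, ![1, -η, 0] i • ![y n, y (n - 1), y (n - 2)] i := by
    simp only [Fin.sum_univ_three, Matrix.cons_val]
    module
  have hres : γ0 • y n + γ1 • y (n - 1) + γ2 • y (n - 2) =
      ∑ i, ![γ0, γ1, γ2] i • ![y n, y (n - 1), y (n - 2)] i := by
    simp only [Fin.sum_univ_three, Matrix.cons_val]
  have hinit : ![y n, y (n - 1)] = Fin.init ![y n, y (n - 1), y (n - 2)] := by
    ext i
    fin_cases i <;> rfl
  rw [hdiff, hextrap, hres, hinit]
  exact h.isGDecomposition.inner_sum_smul_sum_smul _
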